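/- Let Ω ⊂ ℝ² be a nonempty bounded open simply connected set, B smooth on a neighborhood of the closure of Ω with B(x) > 0 for all x in the closure of Ω, ψ smooth on a neighborhood of the closure of Ω with Δψ = B in Ω and ψ = 0 on ∂Ω, ψ_min := inf_Ω ψ, and A = (−∂₂ψ, ∂₁ψ) the canonical vector potential. Then h · log λ_{P₋}(h) converges to 2ψ_min as h → 0⁺, i.e., the function h ↦ h·log λ_{P₋}(h) tends to 2 inf_Ω ψ along h → 0 from the right. -/

import Mathlib

/-!
Writing `u = e^{-ψ/h} v` turns the Pauli form into the weighted Cauchy–Riemann energy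
`Q_h(u) = h² ∫ e^{-2ψ/h} |(∂₁ + i∂₂)v|²`. Since `ψ` is subharmonic and vanishes on `∂Ω`, the
maximum principle gives `ψ ≤ 0`.

For the lower bound, drop the weight `e^{-2ψ/h} ≥ 1`, use that `(∂₁ + i∂₂)v` and `∇v` have the
same `L²` norm when `v` has compact support, and apply Poincaré's inequality together with
`|v|² ≥ e^{2ψ_min/h} |u|²`; this gives `λ(h) ≥ c h² e^{2ψ_min/h}`.

For the upper bound, take for `v` a cutoff that equals `1` where `ψ ≤ b`, with `b < 0` close to
`0`. The energy is then at most `C h² e^{-2b/h}`, while near a point where `ψ < a`, with `a` close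
to `ψ_min`, the mass is at least `c e^{-2a/h}`; hence `λ(h) ≤ C h² e^{2(a - b)/h}`. The powers of
`h` are invisible in the limit because `h log h → 0`.
-/

open MeasureTheory Filter Topology

noncomputable section

abbrev E2 : Type := EuclideanSpace ℝ (Fin 2)

/-- Partial derivative of a complex-valued function in the `i`-th coordinate direction. -/
def pdC (i : Fin 2) (f : E2 → ℂ) (x : E2) : ℂ :=
  fderiv ℝ f x (EuclideanSpace.single i 1)

/-- Partial derivative of a real-valued function in the `i`-th coordinate direction. -/
def pdR (i : Fin 2) (f : E2 → ℝ) (x : E2) : ℝ :=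
  fderiv ℝ f x (EuclideanSpace.single i 1)

/-- The Laplacian `Δf = ∂₁²f + ∂₂²f`. -/
def lapl (f : E2 → ℝ) (x : E2) : ℝ :=
  pdR 0 (pdR 0 f) x + pdR 1 (pdR 1 f) x

/-- The Pauli quadratic form
`Q_h(u) = ∫_Ω (|h∂₁u − iA₁u|² + |h∂₂u − iA₂u|²) dx − h∫_Ω B|u|² dx`. -/
def pauliQ (Ω : Set E2) (A₁ A₂ B : E2 → ℝ) (h : ℝ) (u : E2 → ℂ) : ℝ :=
  (∫ x in Ω, (‖(h : ℂ) * pdC 0 u x - Complex.I * (A₁ x : ℂ) * u x‖ ^ 2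
      + ‖(h : ℂ) * pdC 1 u x - Complex.I * (A₂ x : ℂ) * u x‖ ^ 2))
    - h * ∫ x in Ω, B x * ‖u x‖ ^ 2

/-- `u ∈ C_c^∞(Ω; ℂ)`. -/
def IsCptSmoothIn (Ω : Set E2) (u : E2 → ℂ) : Prop :=
  ContDiff ℝ (⊤ : ℕ∞) u ∧ HasCompactSupport u ∧ tsupport u ⊆ Ω

/-- The lowest Dirichlet Pauli eigenvalue
`λ_{P₋}(h) = inf { Q_h(u)/∫_Ω|u|² : 0 ≠ u ∈ C_c^∞(Ω;ℂ) }`. -/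
def lambdaP (Ω : Set E2) (A₁ A₂ B : E2 → ℝ) (h : ℝ) : ℝ :=
  sInf { r | ∃ u : E2 → ℂ, IsCptSmoothIn Ω u ∧ u ≠ 0 ∧
    r = pauliQ Ω A₁ A₂ B h u / ∫ x in Ω, ‖u x‖ ^ 2 }

/-! ### Integration by parts for compactly supported functions -/

section IntegrationByParts

theorem integrable_of_continuousOn_of_eq_zero_off {X F : Type*} [TopologicalSpace X] [T2Space X]
    [MeasurableSpace X] [OpensMeasurableSpace X] {μ : Measure X} [IsFiniteMeasureOnCompacts μ]
    [NormedAddCommGroup F] {K : Set X} {f : X → F} (hK : IsCompact K) (hf : ContinuousOn f K)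
    (h0 : ∀ x ∉ K, f x = 0) : Integrable f μ :=
  (integrableOn_iff_integrable_of_support_subset (Function.support_subset_iff'.2 h0)).1
    (hf.integrableOn_compact hK)

variable {E F G W : Type*} [NormedAddCommGroup E] [NormedSpace ℝ E]
  [NormedAddCommGroup F] [NormedSpace ℝ F] [NormedAddCommGroup G] [NormedSpace ℝ G]
  [NormedAddCommGroup W] [NormedSpace ℝ W]

theorem contDiffOn_fderiv_apply {m n : WithTop ℕ∞} {s : Set E} {f : E → F} (hs : IsOpen s)
    (hf : ContDiffOn ℝ n f s) (hmn : m + 1 ≤ n) (v : E) :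
    ContDiffOn ℝ m (fun x => fderiv ℝ f x v) s :=
  (hf.fderiv_of_isOpen hs hmn).clm_apply contDiffOn_const

theorem contDiff_fderiv_apply {m n : WithTop ℕ∞} {f : E → F} (hf : ContDiff ℝ n f)
    (hmn : m + 1 ≤ n) (v : E) : ContDiff ℝ m fun x => fderiv ℝ f x v :=
  (hf.fderiv_right hmn).clm_apply contDiff_const

theorem fderiv_fderiv_apply_comm {f : E → F} {x : E} (hf : ContDiffAt ℝ 2 f x) (v w : E) :
    fderiv ℝ (fun y => fderiv ℝ f y v) x w = fderiv ℝ (fun y => fderiv ℝ f y w) x v := by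
  have hd : DifferentiableAt ℝ (fderiv ℝ f) x :=
    (hf.fderiv_right (m := 1) (by norm_num)).differentiableAt one_ne_zero
  have apply_eq (a b : E) :
      fderiv ℝ (fun y => fderiv ℝ f y a) x b = fderiv ℝ (fderiv ℝ f) x b a := by
    simp [fderiv_clm_apply hd (differentiableAt_const a)]
  rw [apply_eq, apply_eq]
  exact hf.isSymmSndFDerivAt (by simp) w v

variable [FiniteDimensional ℝ E] [MeasurableSpace E] [BorelSpace E] {μ : Measure E}
  [μ.IsAddHaarMeasure]

theorem integral_bilinear_fderiv_right_eq_neg_left_of_hasCompactSupport {s : Set E} {f : E → F}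
    {g : E → G} (B : F →L[ℝ] G →L[ℝ] W) (hs : IsOpen s) (hf : ContDiffOn ℝ 1 f s)
    (hg : ContDiff ℝ 1 g) (hgc : HasCompactSupport g) (hgs : tsupport g ⊆ s) (v : E) :
    ∫ x, B (f x) (fderiv ℝ g x v) ∂μ = -∫ x, B (fderiv ℝ f x v) (g x) ∂μ := by
  have hfc : ContinuousOn f (tsupport g) := hf.continuousOn.mono hgs
  have hfc' : ContinuousOn (fun x => fderiv ℝ f x v) (tsupport g) :=
    (contDiffOn_fderiv_apply hs hf (zero_add 1).le v).continuousOn.mono hgs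
  have hgc' : Continuous fun x => fderiv ℝ g x v :=
    (contDiff_fderiv_apply hg (zero_add 1).le v).continuous
  have hg0 (x) (hx : x ∉ tsupport g) : g x = 0 := image_eq_zero_of_notMem_tsupport hx
  refine integral_bilinear_fderiv_right_eq_neg_left_of_integrable
    (integrable_of_continuousOn_of_eq_zero_off hgc ?_ fun x hx => by simp [hg0 x hx])
    (integrable_of_continuousOn_of_eq_zero_off hgc ?_ fun x hx => by
      simp [fderiv_of_notMem_tsupport ℝ hx])
    (integrable_of_continuousOn_of_eq_zero_off hgc ?_ fun x hx => by simp [hg0 x hx])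
    (fun x hx => (hf.contDiffAt (hs.mem_nhds (hgs hx))).differentiableAt one_ne_zero)
    (fun x _ => hg.differentiable one_ne_zero x)
  · exact (B.continuous.comp_continuousOn hfc').clm_apply hg.continuous.continuousOn
  · exact (B.continuous.comp_continuousOn hfc).clm_apply hgc'.continuousOn
  · exact (B.continuous.comp_continuousOn hfc).clm_apply hg.continuous.continuousOn

theorem integral_bilinear_fderiv_fderiv_comm {f : E → F} {g : E → G} (B : F →L[ℝ] G →L[ℝ] W)
    (hf : ContDiff ℝ 2 f) (hg : ContDiff ℝ 1 g) (hgc : HasCompactSupport g) (v w : E) :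
    ∫ x, B (fderiv ℝ f x v) (fderiv ℝ g x w) ∂μ =
      ∫ x, B (fderiv ℝ f x w) (fderiv ℝ g x v) ∂μ := by
  have by_parts (a b : E) : ∫ x, B (fderiv ℝ f x a) (fderiv ℝ g x b) ∂μ =
      -∫ x, B (fderiv ℝ (fun y => fderiv ℝ f y a) x b) (g x) ∂μ :=
    integral_bilinear_fderiv_right_eq_neg_left_of_hasCompactSupport B isOpen_univ
      (contDiff_fderiv_apply hf one_add_one_eq_two.le a).contDiffOn hg hgc
      (Set.subset_univ _) b
  rw [by_parts, by_parts]
  exact congrArg Neg.neg (integral_congr_ae (.of_forall fun x => by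
    simp only [fderiv_fderiv_apply_comm hf.contDiffAt v w]))

theorem integral_bilinear_fderiv_fderiv_eq_zero {f : E → F} {B : F →L[ℝ] F →L[ℝ] ℝ}
    (hB : ∀ a b, B a b = -B b a) (hf : ContDiff ℝ 2 f) (hfc : HasCompactSupport f) (v w : E) :
    ∫ x, B (fderiv ℝ f x v) (fderiv ℝ f x w) ∂μ = 0 := by
  have h := integral_bilinear_fderiv_fderiv_comm (μ := μ) B hf (hf.of_le one_le_two) hfc v w
  simp only [hB (fderiv ℝ f _ w), integral_neg] at h
  linarith

end IntegrationByParts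

section Poincare

variable {E F : Type*} [NormedAddCommGroup E] [NormedSpace ℝ E]
  [NormedAddCommGroup F] [InnerProductSpace ℝ F]

theorem fderiv_norm_sq_comp_apply {u : E → F} {x : E} (hu : DifferentiableAt ℝ u x) (v : E) :
    fderiv ℝ (fun y => ‖u y‖ ^ 2) x v = 2 * inner ℝ (u x) (fderiv ℝ u x v) := by
  simp [hu.hasFDerivAt.norm_sq.fderiv]

theorem neg_mul_two_mul_inner_le {t R : ℝ} (ht : |t| ≤ R) (a b : F) :
    -(t * (2 * inner ℝ a b)) ≤ 1 / 2 * ‖a‖ ^ 2 + 2 * R ^ 2 * ‖b‖ ^ 2 := by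
  have hsq : 0 ≤ ‖a + (2 * t) • b‖ ^ 2 := sq_nonneg _
  rw [norm_add_sq_real, inner_smul_right, norm_smul, mul_pow, Real.norm_eq_abs, sq_abs] at hsq
  have hle : t ^ 2 ≤ R ^ 2 := sq_le_sq.2 (ht.trans (le_abs_self R))
  linarith [mul_le_mul_of_nonneg_right hle (sq_nonneg ‖b‖)]

variable [FiniteDimensional ℝ E] [MeasurableSpace E] [BorelSpace E] {μ : Measure E}
  [μ.IsAddHaarMeasure] {u : E → F} {ℓ : E →L[ℝ] ℝ} {e : E}

theorem integral_norm_sq_eq_integral_neg_mul_inner (hu : ContDiff ℝ 1 u)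
    (huc : HasCompactSupport u) (hℓ : ℓ e = 1) :
    ∫ x, ‖u x‖ ^ 2 ∂μ = ∫ x, -(ℓ x * (2 * inner ℝ (u x) (fderiv ℝ u x e))) ∂μ := by
  have h := integral_bilinear_fderiv_right_eq_neg_left_of_hasCompactSupport (μ := μ)
    (ContinuousLinearMap.mul ℝ ℝ) isOpen_univ ℓ.contDiff.contDiffOn (hu.norm_sq ℝ)
    (huc.comp_left (g := fun z => ‖z‖ ^ 2) (by simp)) (Set.subset_univ _) e
  simp only [ContinuousLinearMap.mul_apply', ContinuousLinearMap.fderiv, hℓ, one_mul,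
    fun x => fderiv_norm_sq_comp_apply (hu.differentiable one_ne_zero x) e] at h
  rw [integral_neg, h, neg_neg]

-- Poincaré's inequality: integrate `∂ₑ(ℓ‖u‖²)` and absorb the cross term by Young's inequality.
theorem integral_norm_sq_le_integral_norm_fderiv_sq (hu : ContDiff ℝ 1 u)
    (huc : HasCompactSupport u) (hℓ : ℓ e = 1) {R : ℝ} (hR : ∀ x ∈ tsupport u, |ℓ x| ≤ R) :
    ∫ x, ‖u x‖ ^ 2 ∂μ ≤ 4 * R ^ 2 * ∫ x, ‖fderiv ℝ u x e‖ ^ 2 ∂μ := by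
  have hu' : Continuous fun x => fderiv ℝ u x e :=
    (contDiff_fderiv_apply hu (zero_add 1).le e).continuous
  have hint : Integrable (fun x => ‖u x‖ ^ 2) μ :=
    integrable_of_continuousOn_of_eq_zero_off huc (hu.continuous.norm.pow 2).continuousOn
      fun x hx => by simp [image_eq_zero_of_notMem_tsupport hx]
  have hint' : Integrable (fun x => ‖fderiv ℝ u x e‖ ^ 2) μ :=
    integrable_of_continuousOn_of_eq_zero_off huc (hu'.norm.pow 2).continuousOn
      fun x hx => by simp [fderiv_of_notMem_tsupport ℝ hx]
  have hmono : ∫ x, ‖u x‖ ^ 2 ∂μ ≤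
      ∫ x, (1 / 2 * ‖u x‖ ^ 2 + 2 * R ^ 2 * ‖fderiv ℝ u x e‖ ^ 2) ∂μ := by
    rw [integral_norm_sq_eq_integral_neg_mul_inner hu huc hℓ]
    refine integral_mono (integrable_of_continuousOn_of_eq_zero_off huc ?_ fun x hx => ?_)
      ((hint.const_mul _).add (hint'.const_mul _)) fun x => ?_
    · exact (ℓ.continuous.mul
        (continuous_const.mul (hu.continuous.inner (𝕜 := ℝ) hu'))).neg.continuousOn
    · simp [image_eq_zero_of_notMem_tsupport hx]
    · by_cases hx : x ∈ tsupport u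
      · exact neg_mul_two_mul_inner_le (hR x hx) _ _
      · simp [image_eq_zero_of_notMem_tsupport hx, fderiv_of_notMem_tsupport ℝ hx]
  rw [integral_add (hint.const_mul _) (hint'.const_mul _), integral_const_mul,
    integral_const_mul] at hmono
  linarith

end Poincare

/-! ### The maximum principle -/

section MaximumPrinciple

theorem le_of_forall_not_isLocalMax {X : Type*} [TopologicalSpace X] {s : Set X} {f : X → ℝ}
    {M : ℝ} (hs : IsOpen s) (hsc : IsCompact (closure s)) (hf : ContinuousOn f (closure s))
    (hmax : ∀ x ∈ s, ¬IsLocalMax f x) (hM : ∀ x ∈ frontier s, f x ≤ M) {x : X} (hx : x ∈ s) :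
    f x ≤ M := by
  obtain ⟨y, hy, hymax⟩ := hsc.exists_isMaxOn ⟨x, subset_closure hx⟩ hf
  have hys : y ∉ s := fun hys =>
    hmax y hys ((hymax.on_subset subset_closure).isLocalMax (hs.mem_nhds hys))
  exact (hymax (subset_closure hx)).trans (hM y (hs.frontier_eq ▸ ⟨hy, hys⟩))

theorem deriv_deriv_nonpos_of_isLocalMax {f : ℝ → ℝ} {a : ℝ} (hf : ContinuousAt f a)
    (hmax : IsLocalMax f a) : deriv (deriv f) a ≤ 0 := by
  by_contra! hpos
  have hmin : IsLocalMin f a := isLocalMin_of_deriv_deriv_pos hpos hmax.deriv_eq_zero hf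
  have hconst : f =ᶠ[𝓝 a] fun _ => f a := by
    filter_upwards [hmax, hmin] with x h₁ h₂ using le_antisymm h₁ h₂
  simp [hconst.deriv.deriv_eq] at hpos

theorem fderiv_fderiv_apply_nonpos_of_isLocalMax {E : Type*} [NormedAddCommGroup E]
    [NormedSpace ℝ E] {f : E → ℝ} {x : E} (hf : ContDiffAt ℝ 2 f x) (hmax : IsLocalMax f x)
    (v : E) : fderiv ℝ (fun y => fderiv ℝ f y v) x v ≤ 0 := by
  have hline (t : ℝ) : HasDerivAt (fun s : ℝ => x + s • v) v t := by
    simpa using ((hasDerivAt_id t).smul_const v).const_add x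
  have htend : Tendsto (fun s : ℝ => x + s • v) (𝓝 0) (𝓝 x) := by
    simpa using (hline 0).continuousAt.tendsto
  have hderiv {g : E → ℝ} {t : ℝ} (hg : DifferentiableAt ℝ g (x + t • v)) :
      HasDerivAt (fun s : ℝ => g (x + s • v)) (fderiv ℝ g (x + t • v) v) t :=
    hg.hasFDerivAt.comp_hasDerivAt t (hline t)
  have hderiv_eq : deriv (fun s : ℝ => f (x + s • v)) =ᶠ[𝓝 0]
      fun s => fderiv ℝ f (x + s • v) v := by
    filter_upwards [htend.eventually (hf.eventually (by simp))] with s hs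
    exact (hderiv (hs.differentiableAt two_ne_zero)).deriv
  have hf' : DifferentiableAt ℝ (fun y => fderiv ℝ f y v) (x + (0 : ℝ) • v) := by
    simpa using ((hf.fderiv_right (m := 1) (by norm_num)).differentiableAt one_ne_zero).clm_apply
      (differentiableAt_const v)
  have hmax' : IsLocalMax (fun s : ℝ => f (x + s • v)) 0 := by
    simpa [IsLocalMax, IsMaxFilter] using htend.eventually hmax
  have hcont : ContinuousAt (fun s : ℝ => f (x + s • v)) 0 :=
    (hderiv (by simpa using hf.differentiableAt two_ne_zero)).continuousAt
  simpa [hderiv_eq.deriv_eq, (hderiv hf').deriv] using deriv_deriv_nonpos_of_isLocalMax hcont hmax'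

theorem not_isLocalMax_of_lapl_pos {f : E2 → ℝ} {x : E2} (hf : ContDiffAt ℝ 2 f x)
    (hpos : 0 < lapl f x) : ¬IsLocalMax f x := fun hmax =>
  hpos.not_ge (add_nonpos (fderiv_fderiv_apply_nonpos_of_isLocalMax hf hmax _)
    (fderiv_fderiv_apply_nonpos_of_isLocalMax hf hmax _))

theorem lapl_add {f g : E2 → ℝ} {x : E2} (hf : ContDiffAt ℝ 2 f x) (hg : ContDiffAt ℝ 2 g x) :
    lapl (fun y => f y + g y) x = lapl f x + lapl g x := by
  have hadd (i : Fin 2) : pdR i (pdR i fun y => f y + g y) x =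
      pdR i (pdR i f) x + pdR i (pdR i g) x := by
    have hdiff {k : E2 → ℝ} (hk : ContDiffAt ℝ 2 k x) : DifferentiableAt ℝ (pdR i k) x :=
      ((hk.fderiv_right (m := 1) (by norm_num)).differentiableAt one_ne_zero).clm_apply
        (differentiableAt_const _)
    have heq : (pdR i fun y => f y + g y) =ᶠ[𝓝 x] fun y => pdR i f y + pdR i g y := by
      filter_upwards [hf.eventually (by simp), hg.eventually (by simp)] with y hfy hgy
      simp [pdR, fderiv_fun_add (hfy.differentiableAt two_ne_zero)
        (hgy.differentiableAt two_ne_zero)]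
    rw [pdR, heq.fderiv_eq, fderiv_fun_add (hdiff hf) (hdiff hg)]
    rfl
  simp only [lapl, hadd]
  ring

theorem lapl_const_mul_norm_sq (c : ℝ) (x : E2) : lapl (fun y => c * ‖y‖ ^ 2) x = 4 * c := by
  have hfirst (i : Fin 2) : (pdR i fun y => c * ‖y‖ ^ 2) =
      fun y => (2 * c) * EuclideanSpace.proj (𝕜 := ℝ) i y := by
    ext y
    have hd : DifferentiableAt ℝ (fun y : E2 => ‖y‖ ^ 2) y :=
      (contDiff_norm_sq ℝ).differentiable one_ne_zero y
    simp only [pdR, fderiv_const_mul hd, fderiv_norm_sq_apply, smul_apply, coe_innerSL_apply,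
      EuclideanSpace.inner_single_right, Real.ringHom_apply, one_mul, nsmul_eq_mul,
      Nat.cast_ofNat, smul_eq_mul, PiLp.proj_apply]
    ring
  have hsecond (i : Fin 2) : pdR i (pdR i fun y => c * ‖y‖ ^ 2) x = 2 * c := by
    rw [hfirst, pdR, fderiv_const_mul (by fun_prop), ContinuousLinearMap.fderiv]
    simp
  rw [lapl, hsecond, hsecond]
  ring

theorem nonpos_of_lapl_nonneg {Ω : Set E2} {ψ : E2 → ℝ} (hΩo : IsOpen Ω)
    (hΩb : Bornology.IsBounded Ω) (hψ : ContDiffOn ℝ 2 ψ Ω) (hψc : ContinuousOn ψ (closure Ω))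
    (hΔ : ∀ x ∈ Ω, 0 ≤ lapl ψ x) (hbd : ∀ x ∈ frontier Ω, ψ x ≤ 0) {x : E2} (hx : x ∈ Ω) :
    ψ x ≤ 0 := by
  obtain ⟨R, hR0, hR⟩ := hΩb.closure.exists_pos_norm_le
  have perturbed_le (δ : ℝ) (hδ : 0 < δ) : ψ x + δ * ‖x‖ ^ 2 ≤ δ * R ^ 2 := by
    refine le_of_forall_not_isLocalMax hΩo hΩb.isCompact_closure
      (f := fun y => ψ y + δ * ‖y‖ ^ 2) (by fun_prop) (fun y hy => ?_) (fun y hy => ?_) hx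
    · have hψy : ContDiffAt ℝ 2 ψ y := hψ.contDiffAt (hΩo.mem_nhds hy)
      have hny : ContDiffAt ℝ 2 (fun y : E2 => δ * ‖y‖ ^ 2) y :=
        contDiffAt_const.mul (contDiff_norm_sq ℝ).contDiffAt
      refine not_isLocalMax_of_lapl_pos (hψy.add hny) ?_
      rw [lapl_add hψy hny, lapl_const_mul_norm_sq]
      linarith [hΔ y hy]
    · have hyR : ‖y‖ ≤ R := hR y (frontier_subset_closure hy)
      have : δ * ‖y‖ ^ 2 ≤ δ * R ^ 2 := by gcongr
      linarith [hbd y hy]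
  refine le_of_forall_pos_le_add fun ε hε => ?_
  have h := perturbed_le (ε / R ^ 2) (by positivity)
  rw [div_mul_cancel₀ ε (by positivity)] at h
  linarith [show 0 ≤ ε / R ^ 2 * ‖x‖ ^ 2 by positivity]

end MaximumPrinciple

/-! ### Factorization of the Pauli form -/

section Pauli

open Complex (I)

variable {Ω : Set E2} {u v : E2 → ℂ} {h : ℝ}

/-- The magnetic derivative `h∂ᵢ − iA` whose squared modulus enters the Pauli form. -/
def magneticDeriv (A : E2 → ℝ) (h : ℝ) (i : Fin 2) (u : E2 → ℂ) (x : E2) : ℂ :=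
  (h : ℂ) * pdC i u x - I * (A x : ℂ) * u x

/-- The Cauchy–Riemann operator, normalized as `∂₁ + i∂₂`, i.e. twice the Wirtinger derivative
with respect to the conjugate variable. -/
def dbar (v : E2 → ℂ) (x : E2) : ℂ :=
  pdC 0 v x + I * pdC 1 v x

theorem pdC_eq_zero_of_notMem_tsupport {x : E2} (hx : x ∉ tsupport u) (i : Fin 2) :
    pdC i u x = 0 := by
  simp [pdC, fderiv_of_notMem_tsupport ℝ hx]

theorem continuous_pdC (hu : ContDiff ℝ 1 u) (i : Fin 2) : Continuous (pdC i u) :=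
  (contDiff_fderiv_apply hu (zero_add 1).le _).continuous

theorem continuous_dbar (hv : ContDiff ℝ 1 v) : Continuous (dbar v) :=
  (continuous_pdC hv 0).add (continuous_const.mul (continuous_pdC hv 1))

theorem dbar_eq_zero_of_notMem_tsupport {x : E2} (hx : x ∉ tsupport v) : dbar v x = 0 := by
  simp [dbar, pdC_eq_zero_of_notMem_tsupport hx]

theorem continuousOn_magneticDeriv {A : E2 → ℝ} {s : Set E2} (hA : ContinuousOn A s)
    (hu : ContDiff ℝ 1 u) (i : Fin 2) : ContinuousOn (magneticDeriv A h i u) s :=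
  (continuous_const.mul (continuous_pdC hu i)).continuousOn.sub
    ((continuousOn_const.mul (Complex.continuous_ofReal.comp_continuousOn hA)).mul
      hu.continuous.continuousOn)

theorem magneticDeriv_eq_zero_of_notMem_tsupport {x : E2} (hx : x ∉ tsupport u) (A : E2 → ℝ)
    (h : ℝ) (i : Fin 2) : magneticDeriv A h i u x = 0 := by
  simp [magneticDeriv, pdC_eq_zero_of_notMem_tsupport hx, image_eq_zero_of_notMem_tsupport hx]

theorem pdR_norm_sq {x : E2} (hu : DifferentiableAt ℝ u x) (i : Fin 2) :
    pdR i (fun y => ‖u y‖ ^ 2) x = 2 * inner ℝ (u x) (pdC i u x) :=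
  fderiv_norm_sq_comp_apply hu _

theorem norm_magneticDeriv_add_I_mul_sq (A₁ A₂ : E2 → ℝ) (h : ℝ) {x : E2}
    (hu : DifferentiableAt ℝ u x) :
    ‖magneticDeriv A₁ h 0 u x + I * magneticDeriv A₂ h 1 u x‖ ^ 2 =
      (‖magneticDeriv A₁ h 0 u x‖ ^ 2 + ‖magneticDeriv A₂ h 1 u x‖ ^ 2) +
        (2 * h ^ 2 * inner ℝ (pdC 0 u x) (I * pdC 1 u x) +
          h * (A₂ x * pdR 0 (fun y => ‖u y‖ ^ 2) x - A₁ x * pdR 1 (fun y => ‖u y‖ ^ 2) x)) := by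
  rw [pdR_norm_sq hu, pdR_norm_sq hu]
  simp only [magneticDeriv, ← Complex.normSq_eq_norm_sq, Complex.normSq_apply,
    Complex.inner]
  simp only [Complex.add_re, Complex.sub_re, Complex.mul_re, Complex.ofReal_re,
    Complex.ofReal_im, Complex.I_re, Complex.I_im, Complex.mul_im, Complex.sub_im, Complex.add_im,
    Complex.conj_re, Complex.conj_im]
  ring

theorem integral_inner_pdC_I_mul_pdC_eq_zero (hu : ContDiff ℝ 2 u) (huc : HasCompactSupport u) :
    ∫ x, inner ℝ (pdC 0 u x) (I * pdC 1 u x) = 0 :=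
  integral_bilinear_fderiv_fderiv_eq_zero
    (B := (innerSL ℝ).bilinearComp (.id ℝ ℂ) (ContinuousLinearMap.mul ℝ ℂ I))
    (fun a b => by
      simp only [ContinuousLinearMap.bilinearComp_apply, ContinuousLinearMap.id_apply,
        ContinuousLinearMap.mul_apply', coe_innerSL_apply, Complex.inner, Complex.mul_re,
        Complex.mul_im, Complex.conj_re, Complex.conj_im, Complex.I_re, Complex.I_im]
      ring) hu huc _ _

theorem integral_mul_pdR_norm_sq {A : E2 → ℝ} (hΩ : IsOpen Ω) (hA : ContDiffOn ℝ 1 A Ω)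
    (hu : ContDiff ℝ 1 u) (huc : HasCompactSupport u) (hus : tsupport u ⊆ Ω) (i : Fin 2) :
    ∫ x, A x * pdR i (fun y => ‖u y‖ ^ 2) x = -∫ x, pdR i A x * ‖u x‖ ^ 2 :=
  integral_bilinear_fderiv_right_eq_neg_left_of_hasCompactSupport (ContinuousLinearMap.mul ℝ ℝ)
    hΩ hA (hu.norm_sq ℝ) (huc.comp_left (g := fun z => ‖z‖ ^ 2) (by simp))
    ((tsupport_comp_subset (g := fun z : ℂ => ‖z‖ ^ 2) (by simp) u).trans hus) _

theorem integrable_mul_pdR_norm_sq {A : E2 → ℝ} (hA : ContinuousOn A (tsupport u))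
    (hu : ContDiff ℝ 1 u) (huc : HasCompactSupport u) (i : Fin 2) :
    Integrable fun x => A x * pdR i (fun y => ‖u y‖ ^ 2) x := by
  refine integrable_of_continuousOn_of_eq_zero_off huc
    (hA.mul (contDiff_fderiv_apply (hu.norm_sq ℝ) (zero_add 1).le _).continuous.continuousOn)
    fun x hx => ?_
  simp [pdR_norm_sq (hu.differentiable one_ne_zero x),
    image_eq_zero_of_notMem_tsupport hx]

theorem integral_flux_eq_neg_setIntegral {A₁ A₂ B : E2 → ℝ} (hΩ : IsOpen Ω)
    (hA₁ : ContDiffOn ℝ 1 A₁ Ω) (hA₂ : ContDiffOn ℝ 1 A₂ Ω)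
    (hB : ∀ x ∈ Ω, B x = pdR 0 A₂ x - pdR 1 A₁ x) (hu : ContDiff ℝ 1 u)
    (huc : HasCompactSupport u) (hus : tsupport u ⊆ Ω) :
    ∫ x, (A₂ x * pdR 0 (fun y => ‖u y‖ ^ 2) x - A₁ x * pdR 1 (fun y => ‖u y‖ ^ 2) x) =
      -∫ x in Ω, B x * ‖u x‖ ^ 2 := by
  have hint {A : E2 → ℝ} (hA : ContDiffOn ℝ 1 A Ω) (i : Fin 2) :
      Integrable fun x => pdR i A x * ‖u x‖ ^ 2 :=
    integrable_of_continuousOn_of_eq_zero_off huc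
      (((contDiffOn_fderiv_apply hΩ hA (zero_add 1).le _).continuousOn.mono hus).mul
        (hu.continuous.norm.pow 2).continuousOn)
      fun x hx => by simp [image_eq_zero_of_notMem_tsupport hx]
  have hcurl : ∫ x in Ω, B x * ‖u x‖ ^ 2 =
      ∫ x, (pdR 0 A₂ x * ‖u x‖ ^ 2 - pdR 1 A₁ x * ‖u x‖ ^ 2) := by
    have heq : ∀ x ∈ Ω, B x * ‖u x‖ ^ 2 = pdR 0 A₂ x * ‖u x‖ ^ 2 - pdR 1 A₁ x * ‖u x‖ ^ 2 :=
      fun x hx => by rw [hB x hx, sub_mul]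
    rw [setIntegral_congr_fun hΩ.measurableSet heq]
    exact setIntegral_eq_integral_of_forall_compl_eq_zero fun x hx => by
      simp [image_eq_zero_of_notMem_tsupport fun hx' => hx (hus hx')]
  rw [hcurl, integral_sub (hint hA₂ 0) (hint hA₁ 1),
    integral_sub (integrable_mul_pdR_norm_sq (hA₂.continuousOn.mono hus) hu huc 0)
      (integrable_mul_pdR_norm_sq (hA₁.continuousOn.mono hus) hu huc 1),
    integral_mul_pdR_norm_sq hΩ hA₂ hu huc hus, integral_mul_pdR_norm_sq hΩ hA₁ hu huc hus]
  ring

theorem pauliQ_eq_integral_sub (A₁ A₂ B : E2 → ℝ) (h : ℝ) (hus : tsupport u ⊆ Ω) :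
    pauliQ Ω A₁ A₂ B h u =
      (∫ x, (‖magneticDeriv A₁ h 0 u x‖ ^ 2 + ‖magneticDeriv A₂ h 1 u x‖ ^ 2)) -
        h * ∫ x in Ω, B x * ‖u x‖ ^ 2 := by
  rw [← setIntegral_eq_integral_of_forall_compl_eq_zero (s := Ω) fun x hx => by
    simp [magneticDeriv_eq_zero_of_notMem_tsupport fun hx' => hx (hus hx')]]
  rfl

theorem pauliQ_eq_integral_norm_sq {A₁ A₂ B : E2 → ℝ} (hΩ : IsOpen Ω)
    (hA₁ : ContDiffOn ℝ 1 A₁ Ω) (hA₂ : ContDiffOn ℝ 1 A₂ Ω)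
    (hB : ∀ x ∈ Ω, B x = pdR 0 A₂ x - pdR 1 A₁ x) (hu : ContDiff ℝ 2 u)
    (huc : HasCompactSupport u) (hus : tsupport u ⊆ Ω) :
    pauliQ Ω A₁ A₂ B h u =
      ∫ x, ‖magneticDeriv A₁ h 0 u x + I * magneticDeriv A₂ h 1 u x‖ ^ 2 := by
  have hu1 : ContDiff ℝ 1 u := hu.of_le one_le_two
  have hA₁c := hA₁.continuousOn.mono hus
  have hA₂c := hA₂.continuousOn.mono hus
  have hkin : Integrable fun x =>
      ‖magneticDeriv A₁ h 0 u x‖ ^ 2 + ‖magneticDeriv A₂ h 1 u x‖ ^ 2 :=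
    integrable_of_continuousOn_of_eq_zero_off huc
      (((continuousOn_magneticDeriv hA₁c hu1 0).norm.pow 2).add
        ((continuousOn_magneticDeriv hA₂c hu1 1).norm.pow 2))
      fun x hx => by simp [magneticDeriv_eq_zero_of_notMem_tsupport hx]
  have hcross : Integrable fun x => (inner ℝ (pdC 0 u x) (I * pdC 1 u x) : ℝ) :=
    integrable_of_continuousOn_of_eq_zero_off huc
      ((continuous_pdC hu1 0).inner (𝕜 := ℝ)
        (continuous_const.mul (continuous_pdC hu1 1))).continuousOn
      fun x hx => by simp [pdC_eq_zero_of_notMem_tsupport hx]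
  have hflux : Integrable fun x =>
      A₂ x * pdR 0 (fun y => ‖u y‖ ^ 2) x - A₁ x * pdR 1 (fun y => ‖u y‖ ^ 2) x :=
    (integrable_mul_pdR_norm_sq hA₂c hu1 huc 0).sub
      (integrable_mul_pdR_norm_sq hA₁c hu1 huc 1)
  have hrest : Integrable fun x => 2 * h ^ 2 * inner ℝ (pdC 0 u x) (I * pdC 1 u x) +
      h * (A₂ x * pdR 0 (fun y => ‖u y‖ ^ 2) x - A₁ x * pdR 1 (fun y => ‖u y‖ ^ 2) x) :=
    (hcross.const_mul _).add (hflux.const_mul _)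
  simp only [fun x => norm_magneticDeriv_add_I_mul_sq A₁ A₂ h (hu1.differentiable one_ne_zero x)]
  rw [pauliQ_eq_integral_sub A₁ A₂ B h hus, integral_add hkin hrest,
    integral_add (hcross.const_mul _) (hflux.const_mul h), integral_const_mul, integral_const_mul,
    integral_inner_pdC_I_mul_pdC_eq_zero hu huc,
    integral_flux_eq_neg_setIntegral hΩ hA₁ hA₂ hB hu1 huc hus]
  ring

theorem integral_norm_dbar_sq (hv : ContDiff ℝ 2 v) (hvc : HasCompactSupport v) :
    ∫ x, ‖dbar v x‖ ^ 2 = ∫ x, (‖pdC 0 v x‖ ^ 2 + ‖pdC 1 v x‖ ^ 2) := by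
  have h := pauliQ_eq_integral_norm_sq (h := 1) (A₁ := fun _ => 0) (A₂ := fun _ => 0)
    (B := fun _ => 0) isOpen_univ contDiffOn_const contDiffOn_const (fun x _ => by simp [pdR]) hv
    hvc (Set.subset_univ _)
  simpa [pauliQ, magneticDeriv, dbar] using h.symm

theorem integral_norm_sq_le_integral_norm_dbar_sq (hv : ContDiff ℝ 2 v)
    (hvc : HasCompactSupport v) {R : ℝ} (hR : ∀ x ∈ tsupport v, |x 0| ≤ R) :
    ∫ x, ‖v x‖ ^ 2 ≤ 4 * R ^ 2 * ∫ x, ‖dbar v x‖ ^ 2 := by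
  have hpd (i : Fin 2) : Integrable fun x => ‖pdC i v x‖ ^ 2 :=
    integrable_of_continuousOn_of_eq_zero_off hvc
      ((continuous_pdC (hv.of_le one_le_two) i).norm.pow 2).continuousOn
      fun x hx => by simp [pdC_eq_zero_of_notMem_tsupport hx]
  have hpoincare : ∫ x, ‖v x‖ ^ 2 ≤ 4 * R ^ 2 * ∫ x, ‖pdC 0 v x‖ ^ 2 :=
    integral_norm_sq_le_integral_norm_fderiv_sq (hv.of_le one_le_two) hvc
      (ℓ := EuclideanSpace.proj 0) (by simp) hR
  refine hpoincare.trans ?_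
  rw [integral_norm_dbar_sq hv hvc]
  exact mul_le_mul_of_nonneg_left (integral_mono (hpd 0) ((hpd 0).add (hpd 1)) fun x =>
    le_add_of_nonneg_right (sq_nonneg ‖pdC 1 v x‖)) (by positivity)

end Pauli

/-! ### Conjugation by the weight -/

section Gauge

open Complex (I)

variable {Ω : Set E2} {ψ B : E2 → ℝ} {h : ℝ} {v : E2 → ℂ}

theorem pdC_exp_smul {x : E2} (hψ : DifferentiableAt ℝ ψ x) (hv : DifferentiableAt ℝ v x)
    (h : ℝ) (i : Fin 2) : pdC i (fun y => Real.exp (-ψ y / h) • v y) x =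
      Real.exp (-ψ x / h) • (pdC i v x - (pdR i ψ x / h) • v x) := by
  have hexp : HasFDerivAt (fun y => Real.exp (-ψ y / h))
      (-(Real.exp (-ψ x / h) / h) • fderiv ℝ ψ x) x := by
    simpa only [div_eq_mul_inv, smul_neg, neg_smul, smul_smul] using
      (hψ.hasFDerivAt.fun_neg.mul_const h⁻¹).exp
  rw [pdC, (hexp.fun_smul hv.hasFDerivAt).fderiv]
  simp only [neg_smul, add_apply, smul_apply, Complex.real_smul, Complex.ofReal_exp,
    Complex.ofReal_div, Complex.ofReal_neg, ContinuousLinearMap.smulRight_apply, neg_apply,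
    smul_eq_mul, Complex.ofReal_mul, pdC, pdR]
  ring

theorem magneticDeriv_exp_smul_add_I_mul {x : E2} (hψ : DifferentiableAt ℝ ψ x)
    (hv : DifferentiableAt ℝ v x) (hh : h ≠ 0) :
    magneticDeriv (fun y => -pdR 1 ψ y) h 0 (fun y => Real.exp (-ψ y / h) • v y) x +
        I * magneticDeriv (fun y => pdR 0 ψ y) h 1 (fun y => Real.exp (-ψ y / h) • v y) x =
      (h * Real.exp (-ψ x / h)) • dbar v x := by
  rw [magneticDeriv, magneticDeriv, pdC_exp_smul hψ hv, pdC_exp_smul hψ hv, dbar]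
  generalize Real.exp (-ψ x / h) = w
  have hh' : (h : ℂ) ≠ 0 := by exact_mod_cast hh
  simp only [Complex.real_smul]
  push_cast
  field_simp
  linear_combination (-(w * pdR 0 ψ x * v x) : ℂ) * Complex.I_sq

theorem contDiff_smul_of_tsupport_subset {E F : Type*} [NormedAddCommGroup E] [NormedSpace ℝ E]
    [NormedAddCommGroup F] [NormedSpace ℝ F] {n : WithTop ℕ∞} {s : Set E} {g : E → ℝ} {f : E → F}
    (hs : IsOpen s) (hg : ContDiffOn ℝ n g s) (hf : ContDiff ℝ n f) (hfs : tsupport f ⊆ s) :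
    ContDiff ℝ n fun x => g x • f x := by
  refine contDiff_iff_contDiffAt.2 fun x => ?_
  by_cases hx : x ∈ s
  · exact (hg.contDiffAt (hs.mem_nhds hx)).smul hf.contDiffAt
  · have hzero : (fun y => g y • f y) =ᶠ[𝓝 x] fun _ => 0 := by
      filter_upwards [notMem_tsupport_iff_eventuallyEq.1 fun hx' => hx (hfs hx')] with y hy
      simp [hy]
    exact contDiffAt_const.congr_of_eventuallyEq hzero

theorem norm_exp_smul_sq {F : Type*} [NormedAddCommGroup F] [NormedSpace ℝ F] (t : ℝ) (z : F) :
    ‖Real.exp t • z‖ ^ 2 = Real.exp (2 * t) * ‖z‖ ^ 2 := by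
  rw [norm_smul, mul_pow, Real.norm_eq_abs, Real.abs_exp, two_mul, Real.exp_add, sq (Real.exp t)]

theorem pauliQ_exp_smul (hΩ : IsOpen Ω) (hψ : ContDiffOn ℝ 2 ψ Ω)
    (hΔ : ∀ x ∈ Ω, lapl ψ x = B x) (hh : h ≠ 0) (hv : ContDiff ℝ 2 v)
    (hvc : HasCompactSupport v) (hvs : tsupport v ⊆ Ω) :
    pauliQ Ω (fun x => -pdR 1 ψ x) (fun x => pdR 0 ψ x) B h
        (fun x => Real.exp (-ψ x / h) • v x) =
      h ^ 2 * ∫ x, Real.exp (2 * (-ψ x / h)) * ‖dbar v x‖ ^ 2 := by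
  have hpd (i : Fin 2) : ContDiffOn ℝ 1 (pdR i ψ) Ω :=
    contDiffOn_fderiv_apply hΩ hψ one_add_one_eq_two.le _
  have hcurl (x) (hx : x ∈ Ω) :
      B x = pdR 0 (fun y => pdR 0 ψ y) x - pdR 1 (fun y => -pdR 1 ψ y) x := by
    rw [← hΔ x hx, lapl, pdR.eq_1 1 fun y => -pdR 1 ψ y, fderiv_fun_neg]
    exact (sub_neg_eq_add _ _).symm
  have hsupp : (tsupport fun x => Real.exp (-ψ x / h) • v x) ⊆ tsupport v :=
    tsupport_smul_subset_right _ v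
  rw [pauliQ_eq_integral_norm_sq hΩ (hpd 1).neg (hpd 0) hcurl
    (contDiff_smul_of_tsupport_subset hΩ (hψ.neg.div_const h).exp hv hvs)
    (hvc.of_isClosed_subset (isClosed_tsupport _) hsupp) (hsupp.trans hvs), ← integral_const_mul]
  refine integral_congr_ae (.of_forall fun x => ?_)
  by_cases hx : x ∈ tsupport v
  · have hψx : DifferentiableAt ℝ ψ x :=
      (hψ.contDiffAt (hΩ.mem_nhds (hvs hx))).differentiableAt two_ne_zero
    dsimp only
    rw [magneticDeriv_exp_smul_add_I_mul hψx (hv.differentiable two_ne_zero x) hh, mul_smul,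
      norm_smul, mul_pow, norm_exp_smul_sq, Real.norm_eq_abs, sq_abs]
  · dsimp only
    rw [magneticDeriv_eq_zero_of_notMem_tsupport fun hx' => hx (hsupp hx'),
      magneticDeriv_eq_zero_of_notMem_tsupport fun hx' => hx (hsupp hx'),
      dbar_eq_zero_of_notMem_tsupport hx]
    simp

theorem integrable_exp_mul_norm_dbar_sq (hψ : ContinuousOn ψ Ω) (h : ℝ) (hv : ContDiff ℝ 1 v)
    (hvc : HasCompactSupport v) (hvs : tsupport v ⊆ Ω) :
    Integrable fun x => Real.exp (2 * (-ψ x / h)) * ‖dbar v x‖ ^ 2 :=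
  integrable_of_continuousOn_of_eq_zero_off hvc
    ((Real.continuous_exp.comp_continuousOn
      (continuousOn_const.mul ((hψ.mono hvs).neg.div_const h))).mul
        ((continuous_dbar hv).norm.pow 2).continuousOn)
    fun x hx => by simp [dbar_eq_zero_of_notMem_tsupport hx]

end Gauge

/-! ### Bounds on the Rayleigh quotient -/

section Rayleigh

variable {Ω : Set E2} {ψ B : E2 → ℝ} {u : E2 → ℂ} {h : ℝ}

theorem IsCptSmoothIn.smul {g : E2 → ℝ} (hu : IsCptSmoothIn Ω u) (hΩ : IsOpen Ω)
    (hg : ContDiffOn ℝ (⊤ : ℕ∞) g Ω) : IsCptSmoothIn Ω fun x => g x • u x :=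
  have hsupp : (tsupport fun x => g x • u x) ⊆ tsupport u := tsupport_smul_subset_right g u
  ⟨contDiff_smul_of_tsupport_subset hΩ hg hu.1 hu.2.2,
    hu.2.1.of_isClosed_subset (isClosed_tsupport _) hsupp, hsupp.trans hu.2.2⟩

theorem IsCptSmoothIn.contDiff (hu : IsCptSmoothIn Ω u) {n : ℕ} : ContDiff ℝ n u :=
  hu.1.of_le (by exact_mod_cast le_top)

theorem IsCptSmoothIn.eq_zero (hu : IsCptSmoothIn Ω u) {x : E2} (hx : x ∉ Ω) : u x = 0 :=
  image_eq_zero_of_notMem_tsupport fun hx' => hx (hu.2.2 hx')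

theorem IsCptSmoothIn.integrable_norm_sq (hu : IsCptSmoothIn Ω u) :
    Integrable fun x => ‖u x‖ ^ 2 :=
  integrable_of_continuousOn_of_eq_zero_off hu.2.1 (hu.1.continuous.norm.pow 2).continuousOn
    fun x hx => by simp [image_eq_zero_of_notMem_tsupport hx]

theorem IsCptSmoothIn.setIntegral_norm_sq (hu : IsCptSmoothIn Ω u) :
    ∫ x in Ω, ‖u x‖ ^ 2 = ∫ x, ‖u x‖ ^ 2 :=
  setIntegral_eq_integral_of_forall_compl_eq_zero fun x hx => by simp [hu.eq_zero hx]

theorem IsCptSmoothIn.setIntegral_norm_sq_pos (hu : IsCptSmoothIn Ω u) (hu0 : u ≠ 0) :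
    0 < ∫ x in Ω, ‖u x‖ ^ 2 := by
  obtain ⟨x, hx⟩ := Function.ne_iff.1 hu0
  rw [hu.setIntegral_norm_sq]
  exact (hu.1.continuous.norm.pow 2).integral_pos_of_hasCompactSupport_nonneg_nonzero
    (hu.2.1.comp_left (g := fun z => ‖z‖ ^ 2) (by simp)) (fun _ => sq_nonneg _)
    (x := x) (by simpa using hx)

theorem exists_isCptSmoothIn_eq_one {K : Set E2} (hK : IsCompact K) (hΩ : IsOpen Ω)
    (hKΩ : K ⊆ Ω) : ∃ χ : E2 → ℂ, IsCptSmoothIn Ω χ ∧ ∀ x ∈ K, χ x = 1 := by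
  obtain ⟨L, hL, hKL, hLΩ⟩ := exists_compact_between hK hΩ hKΩ
  obtain ⟨χ, hχ, -, hsupp, hone⟩ := exists_contMDiff_support_eq_eq_one_iff (n := (⊤ : ℕ∞))
    (modelWithCornersSelf ℝ E2) isOpen_interior hK.isClosed hKL
  have hsuppL : tsupport (fun x => (χ x : ℂ)) ⊆ L := by
    refine closure_minimal (fun x hx => interior_subset (hsupp ▸ ?_)) hL.isClosed
    simpa using hx
  exact ⟨fun x => χ x, ⟨Complex.ofRealCLM.contDiff.comp (contMDiff_iff_contDiff.1 hχ),
    hL.of_isClosed_subset (isClosed_tsupport _) hsuppL, hsuppL.trans hLΩ⟩,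
    fun x hx => by simp [(hone x).1 hx]⟩

theorem mul_integral_norm_dbar_sq_le_pauliQ_exp_smul {v : E2 → ℂ} {M : ℝ} (hΩ : IsOpen Ω)
    (hψ : ContDiffOn ℝ 2 ψ Ω) (hΔ : ∀ x ∈ Ω, lapl ψ x = B x) (hψM : ∀ x ∈ Ω, ψ x ≤ M)
    (hh : 0 < h) (hv : ContDiff ℝ 2 v) (hvc : HasCompactSupport v) (hvs : tsupport v ⊆ Ω) :
    Real.exp (2 * (-M / h)) * h ^ 2 * ∫ x, ‖dbar v x‖ ^ 2 ≤
      pauliQ Ω (fun x => -pdR 1 ψ x) (fun x => pdR 0 ψ x) B h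
        (fun x => Real.exp (-ψ x / h) • v x) := by
  have hweight : ∫ x, Real.exp (2 * (-M / h)) * ‖dbar v x‖ ^ 2 ≤
      ∫ x, Real.exp (2 * (-ψ x / h)) * ‖dbar v x‖ ^ 2 := by
    refine integral_mono_of_nonneg (.of_forall fun x => by positivity)
      (integrable_exp_mul_norm_dbar_sq hψ.continuousOn h (hv.of_le one_le_two) hvc hvs)
      (.of_forall fun x => ?_)
    by_cases hx : x ∈ Ω
    · have := hψM x hx
      dsimp only
      gcongr
    · simp [dbar_eq_zero_of_notMem_tsupport fun hx' => hx (hvs hx')]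
  rw [integral_const_mul] at hweight
  rw [pauliQ_exp_smul hΩ hψ hΔ hh.ne' hv hvc hvs, mul_comm (Real.exp _), mul_assoc]
  gcongr

theorem mul_setIntegral_norm_sq_le_pauliQ (hΩ : IsOpen Ω) (hψ : ContDiffOn ℝ (⊤ : ℕ∞) ψ Ω)
    (hΔ : ∀ x ∈ Ω, lapl ψ x = B x) (hψ0 : ∀ x ∈ Ω, ψ x ≤ 0) {m : ℝ} (hm : ∀ x ∈ Ω, m ≤ ψ x)
    {R : ℝ} (hR : 0 < R) (hΩR : ∀ x ∈ Ω, |x 0| ≤ R) (hh : 0 < h) (hu : IsCptSmoothIn Ω u) :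
    (4 * R ^ 2)⁻¹ * h ^ 2 * Real.exp (2 * m / h) * ∫ x in Ω, ‖u x‖ ^ 2 ≤
      pauliQ Ω (fun x => -pdR 1 ψ x) (fun x => pdR 0 ψ x) B h u := by
  set v : E2 → ℂ := fun x => Real.exp (ψ x / h) • u x
  have hv : IsCptSmoothIn Ω v := hu.smul hΩ (hψ.div_const h).exp
  have huv : u = fun x => Real.exp (-ψ x / h) • v x := by
    ext x
    rw [smul_smul, ← Real.exp_add, neg_div, neg_add_cancel, Real.exp_zero, one_smul]
  have hnorm : Real.exp (2 * m / h) * ∫ x, ‖u x‖ ^ 2 ≤ ∫ x, ‖v x‖ ^ 2 := by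
    rw [← integral_const_mul]
    refine integral_mono (hu.integrable_norm_sq.const_mul _) hv.integrable_norm_sq fun x => ?_
    by_cases hx : x ∈ Ω
    · rw [norm_exp_smul_sq, ← mul_div_assoc]
      gcongr
      exact hm x hx
    · simp [v, hu.eq_zero hx]
  have hpoincare : ∫ x, ‖v x‖ ^ 2 ≤ 4 * R ^ 2 * ∫ x, ‖dbar v x‖ ^ 2 :=
    integral_norm_sq_le_integral_norm_dbar_sq hv.contDiff hv.2.1 fun x hx => hΩR x (hv.2.2 hx)
  calc (4 * R ^ 2)⁻¹ * h ^ 2 * Real.exp (2 * m / h) * ∫ x in Ω, ‖u x‖ ^ 2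
      = h ^ 2 * ((4 * R ^ 2)⁻¹ * (Real.exp (2 * m / h) * ∫ x, ‖u x‖ ^ 2)) := by
        rw [hu.setIntegral_norm_sq]; ring
    _ ≤ h ^ 2 * ∫ x, ‖dbar v x‖ ^ 2 := by
        gcongr
        rw [inv_mul_le_iff₀ (by positivity)]
        exact hnorm.trans hpoincare
    _ ≤ pauliQ Ω (fun x => -pdR 1 ψ x) (fun x => pdR 0 ψ x) B h u := by
        conv_rhs => rw [huv]
        simpa using mul_integral_norm_dbar_sq_le_pauliQ_exp_smul hΩ (contDiffOn_infty.1 hψ 2) hΔ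
          hψ0 hh hv.contDiff hv.2.1 hv.2.2

theorem pauliQ_exp_smul_le {v : E2 → ℂ} {b : ℝ} (hΩ : IsOpen Ω) (hψ : ContDiffOn ℝ 2 ψ Ω)
    (hΔ : ∀ x ∈ Ω, lapl ψ x = B x) (hh : 0 < h) (hv : ContDiff ℝ 2 v)
    (hvc : HasCompactSupport v) (hvs : tsupport v ⊆ Ω)
    (hvb : ∀ x ∈ Ω, ψ x < b → dbar v x = 0) :
    pauliQ Ω (fun x => -pdR 1 ψ x) (fun x => pdR 0 ψ x) B h
        (fun x => Real.exp (-ψ x / h) • v x) ≤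
      Real.exp (2 * (-b / h)) * h ^ 2 * ∫ x, ‖dbar v x‖ ^ 2 := by
  have hv1 : ContDiff ℝ 1 v := hv.of_le one_le_two
  have hint : Integrable fun x => ‖dbar v x‖ ^ 2 :=
    integrable_of_continuousOn_of_eq_zero_off hvc ((continuous_dbar hv1).norm.pow 2).continuousOn
      fun x hx => by simp [dbar_eq_zero_of_notMem_tsupport hx]
  have hweight : ∫ x, Real.exp (2 * (-ψ x / h)) * ‖dbar v x‖ ^ 2 ≤
      ∫ x, Real.exp (2 * (-b / h)) * ‖dbar v x‖ ^ 2 := by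
    refine integral_mono (integrable_exp_mul_norm_dbar_sq hψ.continuousOn h hv1 hvc hvs)
      (hint.const_mul _) fun x => ?_
    by_cases hx : dbar v x = 0
    · simp [hx]
    · have hxΩ : x ∈ Ω := hvs (not_imp_comm.1 dbar_eq_zero_of_notMem_tsupport hx)
      have hbx : b ≤ ψ x := not_lt.1 fun hlt => hx (hvb x hxΩ hlt)
      dsimp only
      gcongr
  rw [integral_const_mul] at hweight
  rw [pauliQ_exp_smul hΩ hψ hΔ hh.ne' hv hvc hvs, mul_comm (Real.exp _), mul_assoc]
  gcongr

theorem mul_measureReal_le_setIntegral_norm_exp_smul_sq {V : Set E2} {a : ℝ} (hh : 0 < h)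
    (hu : IsCptSmoothIn Ω fun x => Real.exp (-ψ x / h) • u x) (hVΩ : V ⊆ Ω)
    (hV : MeasurableSet V) (hVfin : volume V ≠ ⊤) (huV : ∀ x ∈ V, u x = 1)
    (hψV : ∀ x ∈ V, ψ x ≤ a) :
    Real.exp (2 * (-a / h)) * volume.real V ≤
      ∫ x in Ω, ‖Real.exp (-ψ x / h) • u x‖ ^ 2 := by
  have hle (x) (hx : x ∈ V) : Real.exp (2 * (-a / h)) ≤ ‖Real.exp (-ψ x / h) • u x‖ ^ 2 := by
    rw [norm_exp_smul_sq, huV x hx, norm_one, one_pow, mul_one]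
    have := hψV x hx
    gcongr
  exact (setIntegral_ge_of_const_le_real hV hVfin hle hu.integrable_norm_sq.integrableOn).trans
    (setIntegral_mono_set hu.integrable_norm_sq.integrableOn (.of_forall fun _ => sq_nonneg _)
      hVΩ.eventuallyLE)

theorem exists_isCptSmoothIn_eq_one_dbar_eq_zero {V : Set E2} {b : ℝ} (hΩ : IsOpen Ω)
    (hΩb : Bornology.IsBounded Ω) (hψc : ContinuousOn ψ (closure Ω))
    (hbd : ∀ x ∈ frontier Ω, b < ψ x) (hV : IsCompact V) (hVΩ : V ⊆ Ω) :
    ∃ χ : E2 → ℂ, IsCptSmoothIn Ω χ ∧ (∀ x ∈ V, χ x = 1) ∧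
      ∀ x ∈ Ω, ψ x < b → dbar χ x = 0 := by
  set K := (closure Ω ∩ ψ ⁻¹' Set.Iic b) ∪ V
  have hK : IsCompact K := (hΩb.isCompact_closure.of_isClosed_subset
    (hψc.preimage_isClosed_of_isClosed isClosed_closure isClosed_Iic)
    Set.inter_subset_left).union hV
  have hKΩ : K ⊆ Ω := Set.union_subset (fun x hx => by
    by_contra hxΩ
    exact (hbd x (hΩ.frontier_eq ▸ ⟨hx.1, hxΩ⟩)).not_ge hx.2) hVΩ
  obtain ⟨χ, hχ, hχK⟩ := exists_isCptSmoothIn_eq_one hK hΩ hKΩ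
  refine ⟨χ, hχ, fun x hx => hχK x (.inr hx), fun x hx hxb => ?_⟩
  have hone : χ =ᶠ[𝓝 x] fun _ => 1 := by
    filter_upwards [hΩ.mem_nhds hx,
      (hψc.continuousAt (mem_of_superset (hΩ.mem_nhds hx) subset_closure)).eventually_lt_const hxb]
      with y hy hyb
    exact hχK y (.inl ⟨subset_closure hy, hyb.le⟩)
  simp [dbar, pdC, hone.fderiv_eq]

/- The trial state is `e^{-ψ/h}χ` with a cutoff `χ` equal to `1` on `{ψ ≤ b}` and near `x₀`: its
energy only sees the weight where `ψ ≥ b`, its mass sees it near `x₀`, where `ψ < a`. -/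
theorem exists_isCptSmoothIn_pauliQ_div_le {x₀ : E2} {a b : ℝ} (hΩ : IsOpen Ω)
    (hΩb : Bornology.IsBounded Ω) (hψ : ContDiffOn ℝ (⊤ : ℕ∞) ψ Ω)
    (hψc : ContinuousOn ψ (closure Ω)) (hΔ : ∀ x ∈ Ω, lapl ψ x = B x)
    (hbd : ∀ x ∈ frontier Ω, b < ψ x) (hx₀ : x₀ ∈ Ω) (ha : ψ x₀ < a) :
    ∃ C, ∀ h, 0 < h → ∃ u, IsCptSmoothIn Ω u ∧ u ≠ 0 ∧
      pauliQ Ω (fun x => -pdR 1 ψ x) (fun x => pdR 0 ψ x) B h u / ∫ x in Ω, ‖u x‖ ^ 2 ≤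
        C * h ^ 2 * Real.exp (2 * (a - b) / h) := by
  obtain ⟨r, hr, hball⟩ : ∃ r > 0, Metric.closedBall x₀ r ⊆ Ω ∩ ψ ⁻¹' Set.Iio a :=
    Metric.nhds_basis_closedBall.mem_iff.1
      ((hψ.continuousOn.isOpen_inter_preimage hΩ isOpen_Iio).mem_nhds ⟨hx₀, ha⟩)
  set V := Metric.closedBall x₀ r
  have hVΩ : V ⊆ Ω := hball.trans Set.inter_subset_left
  have hψV (x) (hx : x ∈ V) : ψ x ≤ a := (Set.mem_Iio.1 (hball hx).2).le
  have hVpos : 0 < volume.real V :=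
    ENNReal.toReal_pos (Metric.measure_closedBall_pos volume x₀ hr).ne'
      measure_closedBall_lt_top.ne
  obtain ⟨χ, hχ, hχV, hχb⟩ :=
    exists_isCptSmoothIn_eq_one_dbar_eq_zero hΩ hΩb hψc hbd (isCompact_closedBall x₀ r) hVΩ
  refine ⟨(∫ x, ‖dbar χ x‖ ^ 2) / volume.real V, fun h hh => ?_⟩
  have hu : IsCptSmoothIn Ω fun x => Real.exp (-ψ x / h) • χ x :=
    hχ.smul hΩ (hψ.neg.div_const h).exp
  have hmass := mul_measureReal_le_setIntegral_norm_exp_smul_sq hh hu hVΩ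
    Metric.isClosed_closedBall.measurableSet measure_closedBall_lt_top.ne hχV hψV
  have henergy := pauliQ_exp_smul_le hΩ (contDiffOn_infty.1 hψ 2) hΔ hh hχ.contDiff hχ.2.1
    hχ.2.2 hχb
  refine ⟨_, hu, fun h0 => ?_, ?_⟩
  · have := congrFun h0 x₀
    simp [hχV x₀ (Metric.mem_closedBall_self hr.le)] at this
  · refine (div_le_div₀ (by positivity) henergy (by positivity) hmass).trans_eq ?_
    rw [show 2 * (a - b) / h = 2 * (-b / h) - 2 * (-a / h) by ring, Real.exp_sub]
    field_simp

end Rayleigh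

/-! ### The lowest eigenvalue and its logarithmic limit -/

section Eigenvalue

variable {Ω : Set E2} {A₁ A₂ B : E2 → ℝ} {h c : ℝ}

theorem le_lambdaP (hΩ : IsOpen Ω) (hΩne : Ω.Nonempty)
    (hc : ∀ u, IsCptSmoothIn Ω u → c * ∫ x in Ω, ‖u x‖ ^ 2 ≤ pauliQ Ω A₁ A₂ B h u) :
    c ≤ lambdaP Ω A₁ A₂ B h := by
  obtain ⟨x, hx⟩ := hΩne
  obtain ⟨χ, hχ, hχx⟩ := exists_isCptSmoothIn_eq_one isCompact_singleton hΩ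
    (Set.singleton_subset_iff.2 hx)
  have hχ0 : χ ≠ 0 := fun h0 => by simpa [h0] using hχx x rfl
  refine le_csInf ⟨_, χ, hχ, hχ0, rfl⟩ ?_
  rintro _ ⟨u, hu, hu0, rfl⟩
  exact (le_div_iff₀ (hu.setIntegral_norm_sq_pos hu0)).2 (hc u hu)

theorem lambdaP_le (hc : ∀ u, IsCptSmoothIn Ω u → c * ∫ x in Ω, ‖u x‖ ^ 2 ≤ pauliQ Ω A₁ A₂ B h u)
    {u : E2 → ℂ} (hu : IsCptSmoothIn Ω u) (hu0 : u ≠ 0) :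
    lambdaP Ω A₁ A₂ B h ≤ pauliQ Ω A₁ A₂ B h u / ∫ x in Ω, ‖u x‖ ^ 2 := by
  refine csInf_le ⟨c, ?_⟩ ⟨u, hu, hu0, rfl⟩
  rintro _ ⟨w, hw, hw0, rfl⟩
  exact (le_div_iff₀ (hw.setIntegral_norm_sq_pos hw0)).2 (hc w hw)

theorem tendsto_mul_log_const_mul_pow_mul_exp (hc : 0 < c) (n : ℕ) (a : ℝ) :
    Tendsto (fun h => h * Real.log (c * h ^ n * Real.exp (a / h))) (𝓝[>] 0) (𝓝 a) := by
  have hcont : Continuous fun h => h * Real.log c + n * (h * Real.log h) + a := by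
    have := Real.continuous_mul_log
    fun_prop
  have hlim := (hcont.tendsto 0).mono_left (nhdsWithin_le_nhds (s := Set.Ioi 0))
  simp only [zero_mul, mul_zero, zero_add] at hlim
  refine hlim.congr' ?_
  filter_upwards [self_mem_nhdsWithin] with h (hh : 0 < h)
  rw [Real.log_mul (by positivity) (Real.exp_pos _).ne', Real.log_mul hc.ne' (by positivity),
    Real.log_pow, Real.log_exp]
  field_simp

theorem tendsto_mul_log_of_exp_bounds {f : ℝ → ℝ} {n : ℕ} {a : ℝ} (hc : 0 < c)
    (hlow : ∀ᶠ h in 𝓝[>] 0, c * h ^ n * Real.exp (a / h) ≤ f h)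
    (hup : ∀ ε > 0, ∃ C, ∀ᶠ h in 𝓝[>] 0, f h ≤ C * h ^ n * Real.exp ((a + ε) / h)) :
    Tendsto (fun h => h * Real.log (f h)) (𝓝[>] 0) (𝓝 a) := by
  refine tendsto_order.2 ⟨fun a' ha' => ?_, fun a' ha' => ?_⟩
  · filter_upwards [(tendsto_mul_log_const_mul_pow_mul_exp hc n a).eventually_const_lt ha', hlow,
      self_mem_nhdsWithin] with h hlt hle (hh : 0 < h)
    exact hlt.trans_le (by gcongr)
  · obtain ⟨ε, hε, haε⟩ : ∃ ε > 0, a + ε < a' := ⟨(a' - a) / 2, by linarith, by linarith⟩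
    obtain ⟨C, hC⟩ := hup ε hε
    have hC' : 0 < max C 1 := lt_max_of_lt_right one_pos
    filter_upwards [(tendsto_mul_log_const_mul_pow_mul_exp hC' n (a + ε)).eventually_lt_const haε,
      hlow, hC, self_mem_nhdsWithin] with h hlt hle hCh (hh : 0 < h)
    have hf : 0 < f h := lt_of_lt_of_le (by positivity) hle
    refine lt_of_le_of_lt ?_ hlt
    gcongr
    exact hCh.trans (by gcongr; exact le_max_left C 1)

end Eigenvalue

theorem stmt5_general {Ω : Set E2} {B ψ : E2 → ℝ} (hΩo : IsOpen Ω) (hΩne : Ω.Nonempty)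
    (hΩb : Bornology.IsBounded Ω) (hψ : ContDiffOn ℝ (⊤ : ℕ∞) ψ Ω)
    (hψc : ContinuousOn ψ (closure Ω)) (hB : ∀ x ∈ Ω, 0 ≤ B x)
    (hΔ : ∀ x ∈ Ω, lapl ψ x = B x) (hbd : ∀ x ∈ frontier Ω, ψ x = 0) :
    Tendsto
      (fun h : ℝ =>
        h * Real.log (lambdaP Ω (fun x => -pdR 1 ψ x) (fun x => pdR 0 ψ x) B h))
      (𝓝[>] 0) (𝓝 (2 * sInf (ψ '' Ω))) := by
  set m := sInf (ψ '' Ω)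
  obtain ⟨R, hR, hΩR⟩ := hΩb.exists_pos_norm_le
  have hm (x) (hx : x ∈ Ω) : m ≤ ψ x := csInf_le ((hΩb.isCompact_closure.bddBelow_image hψc).mono
    (Set.image_mono subset_closure)) (Set.mem_image_of_mem ψ hx)
  have hψ0 (x) (hx : x ∈ Ω) : ψ x ≤ 0 :=
    nonpos_of_lapl_nonneg hΩo hΩb (contDiffOn_infty.1 hψ 2) hψc
      (fun y hy => (hB y hy).trans_eq (hΔ y hy).symm) (fun y hy => (hbd y hy).le) hx
  have henergy {h : ℝ} (hh : 0 < h) (u) (hu : IsCptSmoothIn Ω u) :=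
    mul_setIntegral_norm_sq_le_pauliQ hΩo hψ hΔ hψ0 hm hR
      (fun x hx => (PiLp.norm_apply_le x 0).trans (hΩR x hx)) hh hu
  refine tendsto_mul_log_of_exp_bounds (c := (4 * R ^ 2)⁻¹) (n := 2) (by positivity) ?_
    fun ε hε => ?_
  · filter_upwards [self_mem_nhdsWithin] with h hh
    exact le_lambdaP hΩo hΩne (henergy hh)
  · obtain ⟨_, ⟨x₀, hx₀, rfl⟩, hlt⟩ : ∃ y ∈ ψ '' Ω, y < m + ε / 4 :=
      exists_lt_of_csInf_lt (hΩne.image ψ) (by linarith)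
    obtain ⟨C, hC⟩ := exists_isCptSmoothIn_pauliQ_div_le (b := -(ε / 4)) hΩo hΩb hψ hψc hΔ
      (fun x hx => by linarith [hbd x hx]) hx₀ hlt
    refine ⟨C, ?_⟩
    filter_upwards [self_mem_nhdsWithin] with h hh
    obtain ⟨u, hu, hu0, hle⟩ := hC h hh
    rw [show 2 * m + ε = 2 * (m + ε / 4 - -(ε / 4)) by ring]
    exact (lambdaP_le (henergy hh) hu hu0).trans hle

/-- main theorem: if `B > 0` on a neighborhood of `closure Ω`, `Δψ = B` in `Ω`,
`ψ = 0` on `∂Ω`, then `h log λ_{P₋}(h) → 2 inf_Ω ψ` as `h → 0⁺`. -/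
theorem stmt5 (Ω : Set E2) (hΩo : IsOpen Ω) (hΩne : Ω.Nonempty)
    (hΩb : Bornology.IsBounded Ω)
    (hsc : SimplyConnectedSpace Ω)
    (U : Set E2) (hU : IsOpen U) (hclU : closure Ω ⊆ U)
    (B ψ : E2 → ℝ)
    (hBsm : ContDiffOn ℝ (⊤ : ℕ∞) B U) (hBpos : ∀ x ∈ closure Ω, 0 < B x)
    (hψsm : ContDiffOn ℝ (⊤ : ℕ∞) ψ U)
    (hΔ : ∀ x ∈ Ω, lapl ψ x = B x)
    (hbd : ∀ x ∈ frontier Ω, ψ x = 0) :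
    Tendsto
      (fun h : ℝ =>
        h * Real.log (lambdaP Ω (fun x => -pdR 1 ψ x) (fun x => pdR 0 ψ x) B h))
      (𝓝[>] 0) (𝓝 (2 * sInf (ψ '' Ω))) := by
  exact stmt5_general hΩo hΩne hΩb (hψsm.mono (subset_closure.trans hclU))
    (hψsm.continuousOn.mono hclU) (fun x hx => (hBpos x (subset_closure hx)).le) hΔ hbd
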